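/- arXiv:hep-th/9312093 — 2 statements merged into one kernel-verified Lean document; each statement's English description precedes it below -/
import Mathlib

section
/- Let n ≥ 2, let Ω ⊆ ℂ be open, and let φ₁,…,φₙ be smooth real-valued functions on Ω with φ₁+⋯+φₙ = 0. Let ω_z = ∂Φ + ℰ₊ and ω_{z̄} = Σ_{i=1}^{n−1} e^{φᵢ−φᵢ₊₁} E_{i+1,i} be the Toda connection forms, let H = diag(e^{φ₁},…,e^{φₙ}), and set M = I·H. Then ∂M = M·ω_z + ω_{z̄}†·M and ∂̄M = M·ω_{z̄} + ω_z†·M, where † is conjugate transpose. (These identities express that the indefinite hermitean form ⟨u,v⟩ = v†Mu of signature (⌈n/2⌉, ⌊n/2⌋) is flat with respect to the Toda connection D = d + ω_z dz + ω_{z̄} dz̄, i.e. d⟨u,v⟩ = ⟨Du,v⟩ + ⟨u,Dv⟩.) -/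
open Complex Matrix

/-- Wirtinger derivative `∂f = ½(∂ₓf − i ∂_y f)`. -/
noncomputable def wd (f : ℂ → ℂ) (z : ℂ) : ℂ :=
  (1 / 2 : ℂ) * (fderiv ℝ f z 1 - Complex.I * fderiv ℝ f z Complex.I)

/-- Wirtinger derivative `∂̄f = ½(∂ₓf + i ∂_y f)`. -/
noncomputable def wdb (f : ℂ → ℂ) (z : ℂ) : ℂ :=
  (1 / 2 : ℂ) * (fderiv ℝ f z 1 + Complex.I * fderiv ℝ f z Complex.I)

/-- Entrywise Wirtinger derivative `∂A` of a matrix-valued function. -/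
noncomputable def mwd {n : ℕ} (A : ℂ → Matrix (Fin n) (Fin n) ℂ) (z : ℂ) :
    Matrix (Fin n) (Fin n) ℂ :=
  Matrix.of fun i j => wd (fun w => A w i j) z

/-- Entrywise Wirtinger derivative `∂̄A` of a matrix-valued function. -/
noncomputable def mwdb {n : ℕ} (A : ℂ → Matrix (Fin n) (Fin n) ℂ) (z : ℂ) :
    Matrix (Fin n) (Fin n) ℂ :=
  Matrix.of fun i j => wdb (fun w => A w i j) z

/-- Toda connection form `ω_z = ∂Φ + ℰ₊`. -/
noncomputable def omegaZ (n : ℕ) (φ : Fin n → ℂ → ℝ) (z : ℂ) : Matrix (Fin n) (Fin n) ℂ :=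
  Matrix.of fun (i j : Fin n) =>
    if i = j then wd (fun w => ((φ i w : ℝ) : ℂ)) z
    else if (j : ℕ) = (i : ℕ) + 1 then 1
    else 0

/-- Toda connection form `ω_{z̄} = Σ_{i=1}^{n−1} e^{φᵢ−φᵢ₊₁} E_{i+1,i}`. -/
noncomputable def omegaZb (n : ℕ) (φ : Fin n → ℂ → ℝ) (z : ℂ) : Matrix (Fin n) (Fin n) ℂ :=
  Matrix.of fun (i j : Fin n) =>
    if (i : ℕ) = (j : ℕ) + 1 then ((Real.exp (φ j z - φ i z) : ℝ) : ℂ) else 0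

/-- The diagonal matrix `I = diag(1, −1, 1, …, (−1)^{n+1})`. -/
def Imat (n : ℕ) : Matrix (Fin n) (Fin n) ℂ :=
  Matrix.diagonal fun i : Fin n => (-1 : ℂ) ^ (i : ℕ)

/-- `M = I·H` with `H = diag(e^{φ₁},…,e^{φₙ})`. -/
noncomputable def Mform (n : ℕ) (φ : Fin n → ℂ → ℝ) (z : ℂ) : Matrix (Fin n) (Fin n) ℂ :=
  Imat n * Matrix.diagonal fun i => ((Real.exp (φ i z) : ℝ) : ℂ)

/-! `M` is hermitean, so the second identity is the adjoint of the first. For the first,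
`∂M = M ∂Φ`, and it remains to cancel `M ℰ₊` against `ω_{z̄}† M`. Since `ω_{z̄}` is the conjugate
`H⁻¹ ℰ₊† H`, one has `ω_{z̄}† H = H ℰ₊`, and the alternating signs of `I` anticommute with `ℰ₊`. -/

section Wirtinger

variable {n : ℕ}

theorem wd_const (c z : ℂ) : wd (fun _ => c) z = 0 := by
  simp [wd]

theorem wd_const_mul (c : ℂ) (f : ℂ → ℂ) (z : ℂ) : wd (fun w => c * f w) z = c * wd f z := by
  have hderiv : fderiv ℝ (fun w => c * f w) = c • fderiv ℝ f := fderiv_const_smul_field c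
  simp only [wd, hderiv, Pi.smul_apply, _root_.smul_apply, smul_eq_mul]
  ring

theorem wd_cexp {f : ℂ → ℂ} {z : ℂ} (hf : DifferentiableAt ℝ f z) :
    wd (fun w => cexp (f w)) z = cexp (f z) * wd f z := by
  simp only [wd, hf.hasFDerivAt.cexp.fderiv, _root_.smul_apply, smul_eq_mul]
  ring

theorem wdb_star (f : ℂ → ℂ) (z : ℂ) : wdb (fun w => star (f w)) z = star (wd f z) := by
  have hderiv (v : ℂ) : fderiv ℝ (fun w => star (f w)) z v = star (fderiv ℝ f z v) := by
    rw [fderiv_star]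
    rfl
  simp only [wd, wdb, hderiv]
  simp

theorem mwd_diagonal (d : ℂ → Fin n → ℂ) (z : ℂ) :
    mwd (fun w => diagonal (d w)) z = diagonal fun i => wd (fun w => d w i) z := by
  ext i j
  rcases eq_or_ne i j with rfl | hij
  · simp [mwd]
  · simp [mwd, hij, wd_const]

theorem mwd_diagonal_mul (d : Fin n → ℂ) (A : ℂ → Matrix (Fin n) (Fin n) ℂ) (z : ℂ) :
    mwd (fun w => diagonal d * A w) z = diagonal d * mwd A z := by
  ext i j
  simp [mwd, wd_const_mul]

theorem mwdb_conjTranspose (A : ℂ → Matrix (Fin n) (Fin n) ℂ) (z : ℂ) :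
    mwdb (fun w => (A w)ᴴ) z = (mwd A z)ᴴ := by
  ext i j
  exact wdb_star (fun w => A w j i) z

theorem mwdb_eq_conjTranspose_mwd {A : ℂ → Matrix (Fin n) (Fin n) ℂ}
    (hA : ∀ w, (A w).IsHermitian) (z : ℂ) : mwdb A z = (mwd A z)ᴴ := by
  rw [← mwdb_conjTranspose, funext fun w => (hA w).eq]

end Wirtinger

/-- The nilpotent matrix `ℰ₊ = Σ_{i=1}^{n−1} E_{i,i+1}`, the constant part of `ω_z`. -/
def raisingMatrix (n : ℕ) : Matrix (Fin n) (Fin n) ℂ :=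
  Matrix.of fun i j => if (j : ℕ) = i + 1 then 1 else 0

/-- The positive definite hermitean metric `H = diag(e^{φ₁},…,e^{φₙ})`, so that `M = I·H`. -/
noncomputable def todaMetric (n : ℕ) (φ : Fin n → ℂ → ℝ) (z : ℂ) : Matrix (Fin n) (Fin n) ℂ :=
  diagonal fun i => (Real.exp (φ i z) : ℂ)

section Toda

variable (n : ℕ) (φ : Fin n → ℂ → ℝ) (z : ℂ)

theorem omegaZ_eq_diagonal_add_raisingMatrix :
    omegaZ n φ z = diagonal (fun i => wd (fun w => (φ i w : ℂ)) z) + raisingMatrix n := by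
  ext i j
  rcases eq_or_ne i j with rfl | hij
  · simp [omegaZ, raisingMatrix]
  · simp [omegaZ, raisingMatrix, hij]

theorem isHermitian_Imat : (Imat n).IsHermitian :=
  isHermitian_diagonal_of_self_adjoint _ <| funext fun _ => by simp

theorem isHermitian_todaMetric : (todaMetric n φ z).IsHermitian :=
  isHermitian_diagonal_of_self_adjoint _ <| funext fun _ => conj_ofReal _

theorem Mform_eq_Imat_mul_todaMetric : Mform n φ z = Imat n * todaMetric n φ z := rfl

theorem commute_Imat_todaMetric : Commute (Imat n) (todaMetric n φ z) :=
  commute_diagonal _ _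

theorem isHermitian_Mform : (Mform n φ z).IsHermitian :=
  ((isHermitian_Imat n).commute_iff (isHermitian_todaMetric n φ z)).mp
    (commute_Imat_todaMetric n φ z)

theorem Imat_mul_raisingMatrix : Imat n * raisingMatrix n = -(raisingMatrix n * Imat n) := by
  ext i j
  by_cases hj : (j : ℕ) = i + 1
  · simp [Imat, raisingMatrix, hj, pow_succ]
  · simp [Imat, raisingMatrix, hj]

theorem todaMetric_mul_omegaZb :
    todaMetric n φ z * omegaZb n φ z = (raisingMatrix n)ᴴ * todaMetric n φ z := by
  ext i j
  by_cases hi : (i : ℕ) = j + 1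
  · have hexp : Real.exp (φ i z) * Real.exp (φ j z - φ i z) = Real.exp (φ j z) := by
      rw [← Real.exp_add, add_sub_cancel]
    simpa [todaMetric, omegaZb, raisingMatrix, hi] using congrArg ofReal hexp
  · simp [todaMetric, omegaZb, raisingMatrix, hi]

theorem conjTranspose_omegaZb_mul_todaMetric :
    (omegaZb n φ z)ᴴ * todaMetric n φ z = todaMetric n φ z * raisingMatrix n := by
  simpa only [conjTranspose_mul, conjTranspose_conjTranspose, (isHermitian_todaMetric n φ z).eq]
    using congrArg conjTranspose (todaMetric_mul_omegaZb n φ z)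

theorem conjTranspose_omegaZb_mul_Mform :
    (omegaZb n φ z)ᴴ * Mform n φ z = -(Mform n φ z * raisingMatrix n) := by
  have hM : Mform n φ z = todaMetric n φ z * Imat n := commute_Imat_todaMetric n φ z
  rw [hM, ← mul_assoc, conjTranspose_omegaZb_mul_todaMetric, mul_assoc, mul_assoc,
    Imat_mul_raisingMatrix, mul_neg, neg_neg]

variable {n φ z}

theorem mwd_todaMetric (hφ : ∀ i, DifferentiableAt ℝ (φ i) z) :
    mwd (todaMetric n φ) z =
      todaMetric n φ z * diagonal fun i => wd (fun w => (φ i w : ℂ)) z := by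
  have hφ' (i : Fin n) : DifferentiableAt ℝ (fun w => (φ i w : ℂ)) z :=
    ofRealCLM.differentiableAt.comp z (hφ i)
  simp only [funext (todaMetric.eq_def n φ), mwd_diagonal, diagonal_mul_diagonal, ofReal_exp,
    wd_cexp (hφ' _)]

theorem mwd_Mform (hφ : ∀ i, DifferentiableAt ℝ (φ i) z) :
    mwd (Mform n φ) z = Mform n φ z * diagonal fun i => wd (fun w => (φ i w : ℂ)) z := by
  rw [Mform_eq_Imat_mul_todaMetric, mul_assoc, ← mwd_todaMetric hφ]
  exact mwd_diagonal_mul _ (todaMetric n φ) z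

theorem mwd_Mform_eq_mul_omegaZ_add (hφ : ∀ i, DifferentiableAt ℝ (φ i) z) :
    mwd (Mform n φ) z = Mform n φ z * omegaZ n φ z + (omegaZb n φ z)ᴴ * Mform n φ z := by
  rw [mwd_Mform hφ, omegaZ_eq_diagonal_add_raisingMatrix, conjTranspose_omegaZb_mul_Mform,
    mul_add, add_neg_cancel_right]

theorem mwdb_Mform_eq_mul_omegaZb_add (hφ : ∀ i, DifferentiableAt ℝ (φ i) z) :
    mwdb (Mform n φ) z = Mform n φ z * omegaZb n φ z + (omegaZ n φ z)ᴴ * Mform n φ z := by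
  rw [mwdb_eq_conjTranspose_mwd (isHermitian_Mform n φ), mwd_Mform_eq_mul_omegaZ_add hφ,
    conjTranspose_add, conjTranspose_mul, conjTranspose_mul, conjTranspose_conjTranspose,
    (isHermitian_Mform n φ z).eq, add_comm]

end Toda

theorem indefinite_form_flat_for_toda_general {n : ℕ} {φ : Fin n → ℂ → ℝ} {z : ℂ}
    (hφ : ∀ i, DifferentiableAt ℝ (φ i) z) :
    mwd (Mform n φ) z =
        Mform n φ z * omegaZ n φ z + (omegaZb n φ z)ᴴ * Mform n φ z ∧
      mwdb (Mform n φ) z =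
        Mform n φ z * omegaZb n φ z + (omegaZ n φ z)ᴴ * Mform n φ z :=
  ⟨mwd_Mform_eq_mul_omegaZ_add hφ, mwdb_Mform_eq_mul_omegaZb_add hφ⟩

/-- `∂M = M ω_z + ω_{z̄}† M` and `∂̄M = M ω_{z̄} + ω_z† M`: the indefinite hermitean form of
matrix `M = I·H` is flat with respect to the Toda connection `D = d + ω_z dz + ω_{z̄} dz̄`. -/
theorem indefinite_form_flat_for_toda (n : ℕ) (hn : 2 ≤ n) (Ω : Set ℂ) (hΩ : IsOpen Ω)
    (φ : Fin n → ℂ → ℝ) (hφ : ∀ i, ContDiffOn ℝ (⊤ : ℕ∞) (φ i) Ω)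
    (hsum : ∀ z ∈ Ω, ∑ i, φ i z = 0) :
    ∀ z ∈ Ω,
      mwd (Mform n φ) z =
        Mform n φ z * omegaZ n φ z + (omegaZb n φ z)ᴴ * Mform n φ z ∧
      mwdb (Mform n φ) z =
        Mform n φ z * omegaZb n φ z + (omegaZ n φ z)ᴴ * Mform n φ z :=
  fun _ hz => indefinite_form_flat_for_toda_general fun i =>
    ((hφ i).contDiffAt (hΩ.mem_nhds hz)).differentiableAt (by simp)
end

section
/- Let Ω ⊆ ℂ be open and let φ₁, φ₂, φ₃ be smooth real-valued functions on Ω with φ₁+φ₂+φ₃ = 0 satisfying the sl(3) Toda equations: ∂∂̄φ₁ = e^{φ₁−φ₂}, ∂∂̄φ₂ = e^{φ₂−φ₃} − e^{φ₁−φ₂}, ∂∂̄φ₃ = −e^{φ₂−φ₃}. Set h = −∂φ₁, f = ∂²φ₁ + ∂φ₁·∂φ₂, g = ∂φ₃, and G = (1 + h·E₂₁ + f·E₃₁)·(1 + g·E₃₂), a lower-triangular unipotent SL(3,ℂ)-valued map. Let A' = diag(∂φ₁, ∂φ₂, ∂φ₃) + E₁₂ + E₂₃ and A'' = e^{φ₁−φ₂}E₂₁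 + e^{φ₂−φ₃}E₃₂ be the sl(3) Toda connection forms. Then G⁻¹A'G + G⁻¹∂G = E₁₂ + E₂₃ + w₃·E₃₁ + w₂·E₃₂ and G⁻¹A''G + G⁻¹∂̄G = 0, where w₂ = (∂φ₃)² + ∂²φ₃ − ∂²φ₁ − ∂φ₁·∂φ₂ and w₃ = ∂f + f·∂φ₃. -/
open Complex Matrix

/-- `∂φ` for a real-valued function `φ`. -/
noncomputable def pd (φ : ℂ → ℝ) : ℂ → ℂ :=
  fun z => wd (fun w => ((φ w : ℝ) : ℂ)) z

/-- `∂̄φ` for a real-valued function `φ`. -/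
noncomputable def pdb (φ : ℂ → ℝ) : ℂ → ℂ :=
  fun z => wdb (fun w => ((φ w : ℝ) : ℂ)) z

/-- `h = −∂φ₁`. -/
noncomputable def hsl3 (φ1 : ℂ → ℝ) : ℂ → ℂ := fun z => -(pd φ1 z)

/-- `f = ∂²φ₁ + ∂φ₁·∂φ₂`. -/
noncomputable def fsl3 (φ1 φ2 : ℂ → ℝ) : ℂ → ℂ :=
  fun z => wd (pd φ1) z + pd φ1 z * pd φ2 z

/-- The lower-triangular unipotent gauge `G = (1 + hE₂₁ + fE₃₁)(1 + gE₃₂)`, `g = ∂φ₃`. -/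
noncomputable def Gsl3 (φ1 φ2 φ3 : ℂ → ℝ) (z : ℂ) : Matrix (Fin 3) (Fin 3) ℂ :=
  !![1, 0, 0; hsl3 φ1 z, 1, 0; fsl3 φ1 φ2 z, 0, 1] *
    !![1, 0, 0; 0, 1, 0; 0, pd φ3 z, 1]

/-- The `sl(3)` Toda connection form `A' = diag(∂φ₁,∂φ₂,∂φ₃) + E₁₂ + E₂₃`. -/
noncomputable def Apsl3 (φ1 φ2 φ3 : ℂ → ℝ) (z : ℂ) : Matrix (Fin 3) (Fin 3) ℂ :=
  !![pd φ1 z, 1, 0; 0, pd φ2 z, 1; 0, 0, pd φ3 z]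

/-- The `sl(3)` Toda connection form `A'' = e^{φ₁−φ₂}E₂₁ + e^{φ₂−φ₃}E₃₂`. -/
noncomputable def Appsl3 (φ1 φ2 φ3 : ℂ → ℝ) (z : ℂ) : Matrix (Fin 3) (Fin 3) ℂ :=
  !![0, 0, 0; ((Real.exp (φ1 z - φ2 z) : ℝ) : ℂ), 0, 0;
      0, ((Real.exp (φ2 z - φ3 z) : ℝ) : ℂ), 0]

/-- `w₂ = (∂φ₃)² + ∂²φ₃ − ∂²φ₁ − ∂φ₁·∂φ₂`. -/
noncomputable def w2sl3 (φ1 φ2 φ3 : ℂ → ℝ) : ℂ → ℂ :=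
  fun z => (pd φ3 z) ^ 2 + wd (pd φ3) z - wd (pd φ1) z - pd φ1 z * pd φ2 z

/-- `w₃ = ∂f + f·∂φ₃`. -/
noncomputable def w3sl3 (φ1 φ2 φ3 : ℂ → ℝ) : ℂ → ℂ :=
  fun z => wd (fsl3 φ1 φ2) z + fsl3 φ1 φ2 z * pd φ3 z

/-!
Multiplying the gauge equations by `G` on the left turns them into `A'G + ∂G = GW` and
`A''G + ∂̄G = 0`, so no inverse has to be computed. The first is matrix algebra, using only that
`∂φ₁ + ∂φ₂ + ∂φ₃ = 0`. In the second the only entry that is not a Toda equation is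
`∂̄f = e^{φ₂−φ₃}∂φ₁`; it holds because `∂̄∂²φ₁ = ∂(∂∂̄φ₁) = ∂e^{φ₁−φ₂} = (∂φ₁ − ∂φ₂)e^{φ₁−φ₂}`.
-/

open Filter Topology

section Wirtinger

/-- The first-order operator `½(∂ₓ + c ∂_y)`, which is `∂` for `c = -i` and `∂̄` for `c = i`; the
rules of calculus are proved for all `c` at once. -/
noncomputable def wirtinger (c : ℂ) (f : ℂ → ℂ) (z : ℂ) : ℂ :=
  (1 / 2 : ℂ) * (fderiv ℝ f z 1 + c * fderiv ℝ f z I)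

theorem wd_eq_wirtinger : wd = wirtinger (-I) := by
  funext f z
  simp only [wd, wirtinger, neg_mul, sub_eq_add_neg]

theorem wdb_eq_wirtinger : wdb = wirtinger I := rfl

variable {c z : ℂ} {f g : ℂ → ℂ}

theorem wirtinger_congr (h : f =ᶠ[𝓝 z] g) : wirtinger c f z = wirtinger c g z := by
  simp only [wirtinger, h.fderiv_eq]

theorem wirtinger_const (c a z : ℂ) : wirtinger c (fun _ => a) z = 0 := by
  simp [wirtinger]

theorem wirtinger_neg (c : ℂ) (f : ℂ → ℂ) (z : ℂ) :
    wirtinger c (fun w => -f w) z = -wirtinger c f z := by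
  simp only [wirtinger, fderiv_fun_neg, _root_.neg_apply]
  ring

theorem wirtinger_add (hf : DifferentiableAt ℝ f z) (hg : DifferentiableAt ℝ g z) :
    wirtinger c (fun w => f w + g w) z = wirtinger c f z + wirtinger c g z := by
  simp only [wirtinger, fderiv_fun_add hf hg, _root_.add_apply]
  ring

theorem wirtinger_sub (hf : DifferentiableAt ℝ f z) (hg : DifferentiableAt ℝ g z) :
    wirtinger c (fun w => f w - g w) z = wirtinger c f z - wirtinger c g z := by
  simp only [wirtinger, fderiv_fun_sub hf hg, _root_.sub_apply]
  ring

theorem wirtinger_mul (hf : DifferentiableAt ℝ f z) (hg : DifferentiableAt ℝ g z) :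
    wirtinger c (fun w => f w * g w) z = wirtinger c f z * g z + f z * wirtinger c g z := by
  simp only [wirtinger, fderiv_fun_mul hf hg, _root_.add_apply, _root_.smul_apply, smul_eq_mul]
  ring

theorem wirtinger_cexp (hf : DifferentiableAt ℝ f z) :
    wirtinger c (fun w => cexp (f w)) z = cexp (f z) * wirtinger c f z := by
  simp only [wirtinger, hf.hasFDerivAt.cexp.fderiv, _root_.smul_apply, smul_eq_mul]
  ring

theorem wd_cexp_sub (hf : DifferentiableAt ℝ f z) (hg : DifferentiableAt ℝ g z) :
    wd (fun w => cexp (f w - g w)) z = cexp (f z - g z) * (wd f z - wd g z) := by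
  rw [wd_eq_wirtinger, wirtinger_cexp (hf.fun_sub hg), wirtinger_sub hf hg]

theorem wirtinger_add_add_eq_zero {k : ℂ → ℂ} (hf : DifferentiableAt ℝ f z)
    (hg : DifferentiableAt ℝ g z) (h : ∀ᶠ w in 𝓝 z, f w + g w + k w = 0) :
    wirtinger c f z + wirtinger c g z + wirtinger c k z = 0 := by
  have hk : k =ᶠ[𝓝 z] fun w => -(f w + g w) := h.mono fun _ hw => eq_neg_of_add_eq_zero_right hw
  rw [wirtinger_congr hk, wirtinger_neg, wirtinger_add hf hg, add_neg_cancel]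

theorem contDiffAt_wirtinger {m n : WithTop ℕ∞} (hf : ContDiffAt ℝ n f z) (hmn : m + 1 ≤ n) :
    ContDiffAt ℝ m (wirtinger c f) z := by
  have hD : ContDiffAt ℝ m (fderiv ℝ f) z := hf.fderiv_right hmn
  exact contDiffAt_const.mul ((hD.clm_apply contDiffAt_const).add
    (contDiffAt_const.mul (hD.clm_apply contDiffAt_const)))

theorem contDiffAt_wd {m n : WithTop ℕ∞} (hf : ContDiffAt ℝ n f z) (hmn : m + 1 ≤ n) :
    ContDiffAt ℝ m (wd f) z :=
  wd_eq_wirtinger ▸ contDiffAt_wirtinger hf hmn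

theorem differentiableAt_wd (hf : ContDiffAt ℝ 2 f z) : DifferentiableAt ℝ (wd f) z :=
  (contDiffAt_wd (m := 1) hf (by norm_num)).differentiableAt (by simp)

theorem fderiv_wirtinger_apply (hf : ContDiffAt ℝ 2 f z) (v : ℂ) :
    fderiv ℝ (wirtinger c f) z v =
      (1 / 2 : ℂ) * (fderiv ℝ (fderiv ℝ f) z v 1 + c * fderiv ℝ (fderiv ℝ f) z v I) := by
  have hD : HasFDerivAt (fderiv ℝ f) (fderiv ℝ (fderiv ℝ f) z) z :=
    ((hf.fderiv_right (m := 1) (by norm_num)).differentiableAt (by simp)).hasFDerivAt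
  have hv (u : ℂ) := hD.clm_apply (hasFDerivAt_const u z)
  have hw : HasFDerivAt (wirtinger c f) _ z :=
    ((hv 1).add ((hv I).const_mul c)).const_mul (1 / 2 : ℂ)
  simp [hw.fderiv, mul_add]

theorem wirtinger_comm (hf : ContDiffAt ℝ 2 f z) (c d : ℂ) :
    wirtinger c (wirtinger d f) z = wirtinger d (wirtinger c f) z := by
  have hsymm : fderiv ℝ (fderiv ℝ f) z I 1 = fderiv ℝ (fderiv ℝ f) z 1 I :=
    hf.isSymmSndFDerivAt (by simp) I 1
  rw [wirtinger, fderiv_wirtinger_apply hf, fderiv_wirtinger_apply hf, wirtinger,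
    fderiv_wirtinger_apply hf, fderiv_wirtinger_apply hf, hsymm]
  ring

theorem wdb_wd_comm (hf : ContDiffAt ℝ 2 f z) : wdb (wd f) z = wd (wdb f) z := by
  simpa only [wd_eq_wirtinger, wdb_eq_wirtinger] using wirtinger_comm hf I (-I)

end Wirtinger

section GaugeTransform

variable {n R : Type*} [Fintype n] [DecidableEq n] [CommRing R]

/-- The gauge transform `G⁻¹AG + G⁻¹dG` of a connection form `A`, where the matrix `dG` stands for
the derivative of the gauge `G`. -/
noncomputable def gaugeTransform (G A dG : Matrix n n R) : Matrix n n R :=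
  G⁻¹ * A * G + G⁻¹ * dG

theorem gaugeTransform_eq_of_mul_add_eq_mul {G A dG W : Matrix n n R} (hG : IsUnit G.det)
    (h : A * G + dG = G * W) : gaugeTransform G A dG = W := by
  rw [gaugeTransform, mul_assoc, ← mul_add, h, nonsing_inv_mul_cancel_left _ _ hG]

end GaugeTransform

section TodaGauge

/-- The lower left entry `f = ∂p + pq` of the gauge, in terms of `p = ∂φ₁` and `q = ∂φ₂`. -/
noncomputable def todaCorner (p q : ℂ → ℂ) (z : ℂ) : ℂ :=
  wd p z + p z * q z

/-- The gauge `(1 + hE₂₁ + fE₃₁)(1 + gE₃₂)` with `h = -p`, `f = ∂p + pq` and `g = r`. The arguments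
are `p = ∂φ₁`, `q = ∂φ₂` and `r = ∂φ₃`, through which alone the gauge depends on the fields. -/
noncomputable def todaGauge (p q r : ℂ → ℂ) (z : ℂ) : Matrix (Fin 3) (Fin 3) ℂ :=
  !![1, 0, 0; -p z, 1, 0; todaCorner p q z, 0, 1] * !![1, 0, 0; 0, 1, 0; 0, r z, 1]

/-- The `(1,0)`-part `diag(a, b, c) + E₁₂ + E₂₃` of a Toda connection. -/
def todaForm (a b c : ℂ) : Matrix (Fin 3) (Fin 3) ℂ :=
  !![a, 1, 0; 0, b, 1; 0, 0, c]

/-- The `(0,1)`-part `uE₂₁ + vE₃₂` of a Toda connection. -/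
def todaFormBar (u v : ℂ) : Matrix (Fin 3) (Fin 3) ℂ :=
  !![0, 0, 0; u, 0, 0; 0, v, 0]

/-- The Drinfeld–Sokolov normal form `E₁₂ + E₂₃ + w₃E₃₁ + w₂E₃₂`. -/
def drinfeldSokolovForm (w₃ w₂ : ℂ) : Matrix (Fin 3) (Fin 3) ℂ :=
  !![0, 1, 0; 0, 0, 1; w₃, w₂, 0]

variable {p q r : ℂ → ℂ} {z : ℂ}

theorem todaGauge_eq_lowerTriangular (p q r : ℂ → ℂ) :
    todaGauge p q r = fun z => !![1, 0, 0; -p z, 1, 0; todaCorner p q z, r z, 1] := by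
  funext z
  simp [todaGauge]

theorem isUnit_det_todaGauge (p q r : ℂ → ℂ) (z : ℂ) : IsUnit (todaGauge p q r z).det := by
  simp [todaGauge_eq_lowerTriangular, det_fin_three]

theorem wirtinger_todaGauge (c : ℂ) (p q r : ℂ → ℂ) (z : ℂ) :
    (Matrix.of fun i j => wirtinger c (fun w => todaGauge p q r w i j) z) =
      !![0, 0, 0; -wirtinger c p z, 0, 0;
        wirtinger c (todaCorner p q) z, wirtinger c r z, 0] := by
  rw [todaGauge_eq_lowerTriangular]
  ext i j
  fin_cases i <;> fin_cases j <;> simp [wirtinger_const, wirtinger_neg]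

theorem mwd_todaGauge (p q r : ℂ → ℂ) (z : ℂ) :
    mwd (todaGauge p q r) z =
      !![0, 0, 0; -wd p z, 0, 0; wd (todaCorner p q) z, wd r z, 0] := by
  simpa only [mwd, wd_eq_wirtinger] using wirtinger_todaGauge (-I) p q r z

theorem mwdb_todaGauge (p q r : ℂ → ℂ) (z : ℂ) :
    mwdb (todaGauge p q r) z =
      !![0, 0, 0; -wdb p z, 0, 0; wdb (todaCorner p q) z, wdb r z, 0] :=
  wirtinger_todaGauge I p q r z

theorem gaugeTransform_todaForm (hsum : p z + q z + r z = 0) :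
    gaugeTransform (todaGauge p q r z) (todaForm (p z) (q z) (r z)) (mwd (todaGauge p q r) z) =
      drinfeldSokolovForm (wd (todaCorner p q) z + todaCorner p q z * r z)
        (r z ^ 2 + wd r z - wd p z - p z * q z) := by
  apply gaugeTransform_eq_of_mul_add_eq_mul (isUnit_det_todaGauge p q r z)
  have hq : q z = -p z - r z := by linear_combination hsum
  rw [mwd_todaGauge, todaGauge_eq_lowerTriangular, todaForm, drinfeldSokolovForm]
  ext i j
  fin_cases i <;> fin_cases j <;>
    simp [mul_apply, Fin.sum_univ_three, todaCorner, hq] <;> ring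

theorem wdb_todaCorner {u : ℂ → ℂ} {v : ℂ} (hp : ContDiffAt ℝ 2 p z) (hq : DifferentiableAt ℝ q z)
    (hpu : wdb p =ᶠ[𝓝 z] u) (hqv : wdb q z = v - u z) (hu : wd u z = u z * (p z - q z)) :
    wdb (todaCorner p q) z = v * p z := by
  have hp' : DifferentiableAt ℝ p z := hp.differentiableAt (by simp)
  have hwdb : wdb (wd p) z = u z * (p z - q z) := by
    rw [wdb_wd_comm hp, ← hu, wd_eq_wirtinger, wirtinger_congr hpu]
  calc wdb (todaCorner p q) z
      = wdb (wd p) z + (wdb p z * q z + p z * wdb q z) :=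
        (wirtinger_add (differentiableAt_wd hp) (hp'.fun_mul hq)).trans
          (congrArg _ (wirtinger_mul hp' hq))
    _ = u z * (p z - q z) + (u z * q z + p z * (v - u z)) := by rw [hwdb, hpu.eq_of_nhds, hqv]
    _ = v * p z := by ring

theorem gaugeTransform_todaFormBar {u : ℂ → ℂ} {v : ℂ} (hp : ContDiffAt ℝ 2 p z)
    (hq : DifferentiableAt ℝ q z) (hsum : ∀ᶠ w in 𝓝 z, p w + q w + r w = 0)
    (hpu : wdb p =ᶠ[𝓝 z] u) (hqv : wdb q z = v - u z) (hu : wd u z = u z * (p z - q z)) :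
    gaugeTransform (todaGauge p q r z) (todaFormBar (u z) v) (mwdb (todaGauge p q r) z) = 0 := by
  have hr : wdb r z = -v := by
    have hwdb : wdb p z + wdb q z + wdb r z = 0 :=
      wirtinger_add_add_eq_zero (hp.differentiableAt (by simp)) hq hsum
    rw [hpu.eq_of_nhds, hqv] at hwdb
    linear_combination hwdb
  apply gaugeTransform_eq_of_mul_add_eq_mul (isUnit_det_todaGauge p q r z)
  rw [mwdb_todaGauge, todaGauge_eq_lowerTriangular, todaFormBar, hpu.eq_of_nhds, hr,
    wdb_todaCorner hp hq hpu hqv hu]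
  ext i j
  fin_cases i <;> fin_cases j <;> simp [mul_apply]

end TodaGauge

theorem contDiffOn_ofReal {n : WithTop ℕ∞} {Ω : Set ℂ} {φ : ℂ → ℝ} (h : ContDiffOn ℝ n φ Ω) :
    ContDiffOn ℝ n (fun w => (φ w : ℂ)) Ω :=
  ofRealCLM.contDiff.comp_contDiffOn h

theorem appsl3_eq_todaFormBar (φ1 φ2 φ3 : ℂ → ℝ) (z : ℂ) :
    Appsl3 φ1 φ2 φ3 z = todaFormBar (cexp (φ1 z - φ2 z)) (cexp (φ2 z - φ3 z)) := by
  simp only [Appsl3, todaFormBar, ofReal_exp, ofReal_sub]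

theorem sl3_drinfeld_sokolov_gauge_general {Ω : Set ℂ} (hΩ : IsOpen Ω) {ψ1 ψ2 ψ3 : ℂ → ℂ}
    (h1 : ContDiffOn ℝ 3 ψ1 Ω) (h2 : ContDiffOn ℝ 2 ψ2 Ω)
    (hsum : ∀ z ∈ Ω, ψ1 z + ψ2 z + ψ3 z = 0)
    (t1 : ∀ z ∈ Ω, wd (wdb ψ1) z = cexp (ψ1 z - ψ2 z))
    (t2 : ∀ z ∈ Ω, wd (wdb ψ2) z = cexp (ψ2 z - ψ3 z) - cexp (ψ1 z - ψ2 z))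
    {z : ℂ} (hz : z ∈ Ω) :
    gaugeTransform (todaGauge (wd ψ1) (wd ψ2) (wd ψ3) z)
        (todaForm (wd ψ1 z) (wd ψ2 z) (wd ψ3 z)) (mwd (todaGauge (wd ψ1) (wd ψ2) (wd ψ3)) z) =
      drinfeldSokolovForm
        (wd (todaCorner (wd ψ1) (wd ψ2)) z + todaCorner (wd ψ1) (wd ψ2) z * wd ψ3 z)
        (wd ψ3 z ^ 2 + wd (wd ψ3) z - wd (wd ψ1) z - wd ψ1 z * wd ψ2 z) ∧
    gaugeTransform (todaGauge (wd ψ1) (wd ψ2) (wd ψ3) z)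
        (todaFormBar (cexp (ψ1 z - ψ2 z)) (cexp (ψ2 z - ψ3 z)))
        (mwdb (todaGauge (wd ψ1) (wd ψ2) (wd ψ3)) z) = 0 := by
  have hψ1 (w) (hw : w ∈ Ω) : ContDiffAt ℝ 3 ψ1 w := h1.contDiffAt (hΩ.mem_nhds hw)
  have hψ2 (w) (hw : w ∈ Ω) : ContDiffAt ℝ 2 ψ2 w := h2.contDiffAt (hΩ.mem_nhds hw)
  have hd1 (w) (hw : w ∈ Ω) : DifferentiableAt ℝ ψ1 w := (hψ1 w hw).differentiableAt (by simp)
  have hd2 (w) (hw : w ∈ Ω) : DifferentiableAt ℝ ψ2 w := (hψ2 w hw).differentiableAt (by simp)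
  have hwd (w) (hw : w ∈ Ω) : wd ψ1 w + wd ψ2 w + wd ψ3 w = 0 := by
    simpa only [wd_eq_wirtinger] using wirtinger_add_add_eq_zero (hd1 w hw) (hd2 w hw)
      (eventually_of_mem (hΩ.mem_nhds hw) hsum)
  have hwdb1 : wdb (wd ψ1) =ᶠ[𝓝 z] fun w => cexp (ψ1 w - ψ2 w) :=
    eventually_of_mem (hΩ.mem_nhds hz) fun w hw =>
      (wdb_wd_comm ((hψ1 w hw).of_le (by norm_num))).trans (t1 w hw)
  have hwdb2 : wdb (wd ψ2) z = cexp (ψ2 z - ψ3 z) - cexp (ψ1 z - ψ2 z) :=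
    (wdb_wd_comm (hψ2 z hz)).trans (t2 z hz)
  exact ⟨gaugeTransform_todaForm (hwd z hz),
    gaugeTransform_todaFormBar (u := fun w => cexp (ψ1 w - ψ2 w))
      (contDiffAt_wd (hψ1 z hz) (by norm_num)) (differentiableAt_wd (hψ2 z hz))
      (eventually_of_mem (hΩ.mem_nhds hz) hwd) hwdb1 hwdb2 (wd_cexp_sub (hd1 z hz) (hd2 z hz))⟩

/-- The gauge `G` maps the `sl(3)` Toda connection to the Drinfeld–Sokolov form
`E₁₂ + E₂₃ + w₃E₃₁ + w₂E₃₂` with vanishing `∂̄`-part. -/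
theorem sl3_drinfeld_sokolov_gauge (Ω : Set ℂ) (hΩ : IsOpen Ω)
    (φ1 φ2 φ3 : ℂ → ℝ)
    (h1 : ContDiffOn ℝ (⊤ : ℕ∞) φ1 Ω) (h2 : ContDiffOn ℝ (⊤ : ℕ∞) φ2 Ω) (h3 : ContDiffOn ℝ (⊤ : ℕ∞) φ3 Ω)
    (hsum : ∀ z ∈ Ω, φ1 z + φ2 z + φ3 z = 0)
    (t1 : ∀ z ∈ Ω, wd (pdb φ1) z = ((Real.exp (φ1 z - φ2 z) : ℝ) : ℂ))
    (t2 : ∀ z ∈ Ω, wd (pdb φ2) z =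
      ((Real.exp (φ2 z - φ3 z) : ℝ) : ℂ) - ((Real.exp (φ1 z - φ2 z) : ℝ) : ℂ))
    (t3 : ∀ z ∈ Ω, wd (pdb φ3) z = -((Real.exp (φ2 z - φ3 z) : ℝ) : ℂ)) :
    ∀ z ∈ Ω,
      (Gsl3 φ1 φ2 φ3 z)⁻¹ * Apsl3 φ1 φ2 φ3 z * Gsl3 φ1 φ2 φ3 z +
          (Gsl3 φ1 φ2 φ3 z)⁻¹ * mwd (Gsl3 φ1 φ2 φ3) z =
        !![0, 1, 0; 0, 0, 1; w3sl3 φ1 φ2 φ3 z, w2sl3 φ1 φ2 φ3 z, 0] ∧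
      (Gsl3 φ1 φ2 φ3 z)⁻¹ * Appsl3 φ1 φ2 φ3 z * Gsl3 φ1 φ2 φ3 z +
          (Gsl3 φ1 φ2 φ3 z)⁻¹ * mwdb (Gsl3 φ1 φ2 φ3) z = 0 := by
  intro z hz
  rw [appsl3_eq_todaFormBar]
  exact sl3_drinfeld_sokolov_gauge_general hΩ
    (contDiffOn_ofReal (contDiffOn_infty.1 h1 3)) (contDiffOn_ofReal (contDiffOn_infty.1 h2 2))
    (mod_cast hsum) (mod_cast t1) (mod_cast t2) hz
end
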